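/- For every constant C > 0 there exist a constant C' > 0 and a time t₀ ≥ 1 such that the following holds. For all t ≥ t₀, all x ≥ 0 and all ξ = (ξ₁,ξ₂,ξ₃) ∈ ℝ³ with x − t(ξ₁+u) ≥ 0, ∫₀^{t} e^{−ν(ξ)(t−s)} · ( ∫_{ℝ³} e^{−C|ξ'|²} · α(x−(ξ₁+u)(t−s), ξ')⁻¹ dξ' ) ds ≤ C' · t / α(x,ξ). -/

import Mathlib

open MeasureTheory

noncomputable section

/-- The kinetic weight `α̃(x,ξ) = √((ξ₁+u)² + (cν₀)² x²)`. -/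
def alphaTilde (u c ν₀ : ℝ) (x : ℝ) (ξ : EuclideanSpace ℝ (Fin 3)) : ℝ :=
  Real.sqrt ((ξ 0 + u) ^ 2 + (c * ν₀) ^ 2 * x ^ 2)

/-!
By AM-GM, `α̃(X,ξ')² ≥ cν₀ |ξ'₁+u| X`, so the velocity integral at position `X > 0` is at most a
constant times `1 + X^{-1/2}`: the singularity `|ξ'₁+u|^{-1/2}` is integrable against a Gaussian.

Along the trajectory the position `X(s) = x - (ξ₁+u)(t-s)` is affine in `s`, with nonnegative
endpoint values `x - t(ξ₁+u)` and `x`. If `N` is the larger of the two, then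
`X(s) ≥ N min(s, t-s) / t`, whence the integral of `X(s)^{-1/2}` over `[0,t]` is at most
`4 t N^{-1/2}`. For `t ≥ 1` one has `α̃(x,ξ) ≤ (1 + cν₀) N`, and `α ≤ √(2α̃)` turns `N^{-1/2}`
into a multiple of `1 / α(x,ξ)`.
-/

open Set

section Gaussian

variable {b : ℝ}

lemma exp_neg_mul_sq_norm_mul_eq_mul_prod_succAbove {n : ℕ} (i : Fin (n + 1)) (g : ℝ → ℝ)
    (ξ : EuclideanSpace ℝ (Fin (n + 1))) :
    Real.exp (-b * ‖ξ‖ ^ 2) * g (ξ i) =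
      Real.exp (-b * ξ i ^ 2) * g (ξ i) * ∏ j, Real.exp (-b * ξ (i.succAbove j) ^ 2) := by
  rw [EuclideanSpace.real_norm_sq_eq, Fin.sum_univ_succAbove _ i, mul_add, Real.exp_add,
    Finset.mul_sum, Real.exp_sum]
  ring

theorem integrable_exp_neg_mul_sq_norm_mul_comp_coord_iff (hb : 0 < b) {n : ℕ} (i : Fin (n + 1))
    {g : ℝ → ℝ} :
    Integrable (fun ξ : EuclideanSpace ℝ (Fin (n + 1)) ↦ Real.exp (-b * ‖ξ‖ ^ 2) * g (ξ i)) ↔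
      Integrable fun z ↦ Real.exp (-b * z ^ 2) * g z := by
  let f : ℝ → ℝ := fun z ↦ Real.exp (-b * z ^ 2) * g z
  let h : (Fin n → ℝ) → ℝ := fun y ↦ ∏ j, Real.exp (-b * y j ^ 2)
  have h_integrable : Integrable h :=
    Integrable.fintype_prod fun _ ↦ integrable_exp_neg_mul_sq hb
  have h_ne_zero (y : Fin n → ℝ) : h y ≠ 0 :=
    Finset.prod_ne_zero_iff.2 fun _ _ ↦ Real.exp_ne_zero _
  have e₁ := PiLp.volume_preserving_ofLp (Fin (n + 1))
  have e₂ := volume_preserving_piFinSuccAbove (fun _ : Fin (n + 1) ↦ ℝ) i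
  calc
    _ ↔ Integrable ((fun p : ℝ × (Fin n → ℝ) ↦ f p.1 * h p.2) ∘
          MeasurableEquiv.piFinSuccAbove (fun _ ↦ ℝ) i ∘ WithLp.ofLp) :=
      integrable_congr (.of_forall (exp_neg_mul_sq_norm_mul_eq_mul_prod_succAbove i g))
    _ ↔ Integrable fun p : ℝ × (Fin n → ℝ) ↦ f p.1 * h p.2 := by
      rw [← Function.comp_assoc, e₁.integrable_comp_emb
        (MeasurableEquiv.toLp 2 _).symm.measurableEmbedding,
        e₂.integrable_comp_emb (MeasurableEquiv.measurableEmbedding _)]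
    _ ↔ Integrable f := by
      refine ⟨fun hfh ↦ ?_, fun hf ↦ hf.mul_prod h_integrable⟩
      obtain ⟨y, hy⟩ := (Integrable.prod_left_ae hfh).exists
      simpa [h_ne_zero y] using hy.mul_const (h y)⁻¹

theorem integrable_exp_neg_mul_sq_mul_abs_add_rpow (hb : 0 < b) {r : ℝ} (hr : -1 < r) (hr₀ : r ≤ 0)
    (a : ℝ) : Integrable fun z : ℝ ↦ Real.exp (-b * z ^ 2) * |z + a| ^ r := by
  let f : ℝ → ℝ := (Metric.ball 0 1).indicator fun z ↦ |z| ^ r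
  have hf : Integrable f :=
    IntegrableOn.integrable_indicator
      (integrableOn_ball_of_norm_le_rpow (C := 1) (α := -r) (by simp) (by simpa [neg_lt] using hr)
        (.of_forall fun z ↦ by simp [abs_of_nonneg (Real.rpow_nonneg (abs_nonneg z) r)])
        (Measurable.pow_const (by fun_prop) r).aestronglyMeasurable) measurableSet_ball
  refine ((integrable_exp_neg_mul_sq hb).add (hf.comp_add_right a)).mono' (by fun_prop)
    (.of_forall fun z ↦ ?_)
  have h_rpow : 0 ≤ |z + a| ^ r := by positivity
  rw [Real.norm_of_nonneg (by positivity), Pi.add_apply]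
  by_cases hz : z + a ∈ Metric.ball 0 1
  · have h_exp : Real.exp (-b * z ^ 2) ≤ 1 := Real.exp_le_one_iff.2 (by nlinarith [sq_nonneg z])
    rw [show f (z + a) = |z + a| ^ r from indicator_of_mem hz _]
    exact (mul_le_of_le_one_left h_rpow h_exp).trans (le_add_of_nonneg_left (Real.exp_nonneg _))
  · rw [show f (z + a) = 0 from indicator_of_notMem hz _, add_zero]
    refine mul_le_of_le_one_right (Real.exp_nonneg _) (Real.rpow_le_one_of_one_le_of_nonpos ?_ hr₀)
    simpa using hz

theorem not_integrable_exp_neg_mul_sq_mul_inv_abs_add (a : ℝ) :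
    ¬ Integrable fun z : ℝ ↦ Real.exp (-b * z ^ 2) * |z + a|⁻¹ := by
  intro h
  have h_abs : IntervalIntegrable (fun z ↦ |z + a|⁻¹) volume (-a) (-a + 1) := by
    refine (h.intervalIntegrable.continuousOn_mul
      (g := fun z ↦ Real.exp (b * z ^ 2)) (by fun_prop)).congr fun z _ ↦ ?_
    simp [← mul_assoc, ← Real.exp_add]
  exact not_intervalIntegrable_of_sub_inv_isBigO_punctured (c := -a)
    (Asymptotics.isBigO_of_le _ fun z ↦ by simp) (by simp) left_mem_uIcc h_abs

lemma ae_coord_ne {ι : Type*} [Fintype ι] (i : ι) (a : ℝ) :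
    ∀ᵐ ξ : EuclideanSpace ℝ ι, ξ i ≠ a :=
  ((Measure.quasiMeasurePreserving_eval (fun _ : ι ↦ (volume : Measure ℝ)) i).comp
    (PiLp.volume_preserving_ofLp ι).quasiMeasurePreserving).ae (Measure.ae_ne volume a)

end Gaussian

section KineticWeight

variable {u c ν₀ x X : ℝ} {ξ : EuclideanSpace ℝ (Fin 3)}

lemma alphaTilde_nonneg : 0 ≤ alphaTilde u c ν₀ x ξ :=
  Real.sqrt_nonneg _

lemma alphaTilde_zero : alphaTilde u c ν₀ 0 ξ = |ξ 0 + u| := by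
  simp [alphaTilde, Real.sqrt_sq_eq_abs]

lemma alphaTilde_eq_zero_iff (hk : 0 < c * ν₀) :
    alphaTilde u c ν₀ x ξ = 0 ↔ ξ 0 + u = 0 ∧ x = 0 := by
  rw [alphaTilde, Real.sqrt_eq_zero (by positivity),
    add_eq_zero_iff_of_nonneg (by positivity) (by positivity)]
  simp [hk.ne']

lemma alphaTilde_le (hk : 0 < c * ν₀) (hx : 0 ≤ x) :
    alphaTilde u c ν₀ x ξ ≤ |ξ 0 + u| + c * ν₀ * x := by
  refine Real.sqrt_le_iff.2 ⟨by positivity, ?_⟩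
  nlinarith [sq_abs (ξ 0 + u), mul_nonneg (abs_nonneg (ξ 0 + u)) (mul_nonneg hk.le hx)]

lemma inv_alphaTilde_le (hk : 0 < c * ν₀) (hX : 0 < X) (hξ : ξ 0 + u ≠ 0) :
    (alphaTilde u c ν₀ X ξ)⁻¹ ≤
      (c * ν₀) ^ (-(1 / 2) : ℝ) * |ξ 0 + u| ^ (-(1 / 2) : ℝ) * X ^ (-(1 / 2) : ℝ) := by
  have h_abs : 0 < |ξ 0 + u| := abs_pos.2 hξ
  have h_amgm : c * ν₀ * |ξ 0 + u| * X ≤ (ξ 0 + u) ^ 2 + (c * ν₀) ^ 2 * X ^ 2 := by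
    nlinarith [sq_nonneg (|ξ 0 + u| - c * ν₀ * X), sq_abs (ξ 0 + u),
      mul_pos (mul_pos hk h_abs) hX]
  calc (alphaTilde u c ν₀ X ξ)⁻¹
      = ((ξ 0 + u) ^ 2 + (c * ν₀) ^ 2 * X ^ 2) ^ (-(1 / 2) : ℝ) := by
        rw [alphaTilde, Real.sqrt_eq_rpow, Real.rpow_neg (by positivity)]
    _ ≤ (c * ν₀ * |ξ 0 + u| * X) ^ (-(1 / 2) : ℝ) :=
        Real.rpow_le_rpow_of_nonpos (by positivity) h_amgm (by norm_num)
    _ = _ := by rw [Real.mul_rpow (by positivity) hX.le, Real.mul_rpow hk.le (abs_nonneg _)]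

end KineticWeight

/-- The truncations `χ` at height one which turn `α̃` into the bounded kinetic weight `α = χ ∘ α̃`;
the paper's condition `χ = 1` on `[2, ∞)` is recorded through its consequence `χ ≤ 1`. -/
structure IsTruncation (χ : ℝ → ℝ) : Prop where
  monotoneOn : MonotoneOn χ (Ici 0)
  eq_self : ∀ s, 0 ≤ s → s ≤ 1 / 2 → χ s = s
  le_one : ∀ s, 0 ≤ s → χ s ≤ 1

namespace IsTruncation

variable {χ χ' : ℝ → ℝ} {r : ℝ}

theorem of_hasDerivAt (hderiv : ∀ s ≥ (0 : ℝ), HasDerivAt χ (χ' s) s)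
    (hmono : ∀ s ≥ (0 : ℝ), 0 ≤ χ' s) (hid : ∀ s : ℝ, 0 ≤ s → s ≤ 1 / 2 → χ s = s)
    (hone : ∀ s : ℝ, 2 ≤ s → χ s = 1) : IsTruncation χ := by
  have h_mono : MonotoneOn χ (Ici 0) :=
    monotoneOn_of_hasDerivWithinAt_nonneg (convex_Ici 0)
      (fun s hs ↦ (hderiv s hs).continuousAt.continuousWithinAt)
      (fun s hs ↦ (hderiv s (interior_subset hs)).hasDerivWithinAt)
      (fun s hs ↦ hmono s (interior_subset hs))
  refine ⟨h_mono, hid, fun s hs ↦ ?_⟩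
  rw [← hone (max s 2) (le_max_right s 2)]
  exact h_mono hs (hs.trans (le_max_left s 2)) (le_max_left s 2)

variable (hχ : IsTruncation χ)
include hχ

lemma min_half_le (hr : 0 ≤ r) : min r (1 / 2) ≤ χ r := by
  rw [← hχ.eq_self (min r (1 / 2)) (by positivity) (min_le_right _ _)]
  exact hχ.monotoneOn (mem_Ici.2 (by positivity)) hr (min_le_left _ _)

lemma nonneg (hr : 0 ≤ r) : 0 ≤ χ r :=
  (le_min hr one_half_pos.le).trans (hχ.min_half_le hr)

lemma pos (hr : 0 < r) : 0 < χ r :=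
  (lt_min hr one_half_pos).trans_le (hχ.min_half_le hr.le)

lemma apply_zero : χ 0 = 0 :=
  hχ.eq_self 0 le_rfl one_half_pos.le

lemma inv_le (hr : 0 < r) : (χ r)⁻¹ ≤ 2 + r⁻¹ := by
  have h_inv : 0 < r⁻¹ := inv_pos.2 hr
  refine (inv_anti₀ (lt_min hr one_half_pos) (hχ.min_half_le hr.le)).trans ?_
  rcases min_choice r (1 / 2) with h | h <;> rw [h] <;> linarith

lemma le_two_mul (hr : 0 ≤ r) : χ r ≤ 2 * r := by
  rcases le_total r (1 / 2) with h | h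
  · rw [hχ.eq_self r hr h]
    linarith
  · linarith [hχ.le_one r hr]

lemma le_sqrt (hr : 0 ≤ r) : χ r ≤ √(2 * r) :=
  Real.le_sqrt_of_sq_le <| by
    nlinarith [hχ.nonneg hr, hχ.le_one r hr, hχ.le_two_mul hr]

end IsTruncation

/-- The velocity integral `∫ e^{-C|ξ'|²} α(X,ξ')⁻¹ dξ'` of the reciprocal weight `α = χ ∘ α̃` at
position `X`. As a Bochner integral it takes the value `0` where the integral diverges. -/
def invWeightIntegral (C u c ν₀ : ℝ) (χ : ℝ → ℝ) (X : ℝ) : ℝ :=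
  ∫ ξ : EuclideanSpace ℝ (Fin 3), Real.exp (-C * ‖ξ‖ ^ 2) * (χ (alphaTilde u c ν₀ X ξ))⁻¹

section VelocityIntegral

variable {C u c ν₀ X : ℝ} {χ : ℝ → ℝ}

lemma invWeightIntegral_nonneg (hχ : IsTruncation χ) : 0 ≤ invWeightIntegral C u c ν₀ χ X :=
  integral_nonneg fun _ ↦
    mul_nonneg (Real.exp_nonneg _) (inv_nonneg.2 (hχ.nonneg alphaTilde_nonneg))

theorem exists_invWeightIntegral_le (hC : 0 < C) (hk : 0 < c * ν₀) (hχ : IsTruncation χ) :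
    ∃ K ≥ 0, ∀ X > 0, invWeightIntegral C u c ν₀ χ X ≤ K * (1 + X ^ (-(1 / 2) : ℝ)) := by
  let g : ℝ → ℝ := fun z ↦ 2 + (c * ν₀) ^ (-(1 / 2) : ℝ) * |z + u| ^ (-(1 / 2) : ℝ)
  have hg_nonneg (z : ℝ) : 0 ≤ g z := by positivity
  have hg : Integrable fun ξ : EuclideanSpace ℝ (Fin 3) ↦ Real.exp (-C * ‖ξ‖ ^ 2) * g (ξ 0) := by
    rw [integrable_exp_neg_mul_sq_norm_mul_comp_coord_iff hC]
    refine (((integrable_exp_neg_mul_sq hC).const_mul 2).add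
      ((integrable_exp_neg_mul_sq_mul_abs_add_rpow hC (r := -(1 / 2)) (by norm_num) (by norm_num)
        u).const_mul ((c * ν₀) ^ (-(1 / 2) : ℝ)))).congr (.of_forall fun z ↦ ?_)
    simp only [Pi.add_apply, g]
    ring
  refine ⟨∫ ξ : EuclideanSpace ℝ (Fin 3), Real.exp (-C * ‖ξ‖ ^ 2) * g (ξ 0),
    integral_nonneg fun ξ ↦ mul_nonneg (Real.exp_nonneg _) (hg_nonneg _), fun X hX ↦ ?_⟩
  rw [← integral_mul_const]
  refine integral_mono_of_nonneg (.of_forall fun ξ ↦ mul_nonneg (Real.exp_nonneg _)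
    (inv_nonneg.2 (hχ.nonneg alphaTilde_nonneg))) (hg.mul_const _) ?_
  filter_upwards [ae_coord_ne 0 (-u)] with ξ hξ
  have hξu : ξ 0 + u ≠ 0 := fun h ↦ hξ (eq_neg_of_add_eq_zero_left h)
  have h_alphaTilde_pos : 0 < alphaTilde u c ν₀ X ξ :=
    alphaTilde_nonneg.lt_of_ne' fun h ↦ hξu ((alphaTilde_eq_zero_iff hk).1 h).1
  have h_inv : (χ (alphaTilde u c ν₀ X ξ))⁻¹ ≤ g (ξ 0) * (1 + X ^ (-(1 / 2) : ℝ)) := by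
    have h_sing : 0 ≤ (c * ν₀) ^ (-(1 / 2) : ℝ) * |ξ 0 + u| ^ (-(1 / 2) : ℝ) := by positivity
    have h_X : 0 ≤ X ^ (-(1 / 2) : ℝ) := by positivity
    linarith [hχ.inv_le h_alphaTilde_pos, inv_alphaTilde_le hk hX hξu]
  rw [mul_assoc]
  exact mul_le_mul_of_nonneg_left h_inv (Real.exp_nonneg _)

-- The value `0` is the junk value of a logarithmically divergent integral.
theorem invWeightIntegral_zero (hC : 0 < C) (hχ : IsTruncation χ) :
    invWeightIntegral C u c ν₀ χ 0 = 0 := by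
  refine integral_undef fun h ↦ not_integrable_exp_neg_mul_sq_mul_inv_abs_add (b := C) u ?_
  rw [← integrable_exp_neg_mul_sq_norm_mul_comp_coord_iff (g := fun z ↦ |z + u|⁻¹) hC
    (0 : Fin 3)]
  refine (h.const_mul 2).mono' (by fun_prop) (.of_forall fun ξ ↦ ?_)
  rw [Real.norm_of_nonneg (by positivity), alphaTilde_zero, mul_left_comm]
  refine mul_le_mul_of_nonneg_left ?_ (Real.exp_nonneg _)
  rcases (abs_nonneg (ξ 0 + u)).eq_or_lt with h_zero | h_pos
  · simp [← h_zero, hχ.apply_zero]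
  · rw [← div_eq_mul_inv, inv_le_comm₀ h_pos (div_pos two_pos (hχ.pos h_pos)), inv_div]
    linarith [hχ.le_two_mul h_pos.le]

end VelocityIntegral

section TimeIntegral

variable {x a t s r : ℝ}

lemma intervalIntegrable_rpow_add_sub_rpow (hr : -1 < r) :
    IntervalIntegrable (fun s ↦ s ^ r + (t - s) ^ r) volume 0 t := by
  have h : IntervalIntegrable (fun s : ℝ ↦ s ^ r) volume 0 t :=
    intervalIntegral.intervalIntegrable_rpow' hr
  exact h.add (by simpa using (h.comp_sub_left t).symm)

lemma integral_rpow_add_sub_rpow (hr : -1 < r) :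
    ∫ s in 0..t, (s ^ r + (t - s) ^ r) = 2 * t ^ (r + 1) / (r + 1) := by
  have h : IntervalIntegrable (fun s : ℝ ↦ s ^ r) volume 0 t :=
    intervalIntegral.intervalIntegrable_rpow' hr
  rw [intervalIntegral.integral_add h (by simpa using (h.comp_sub_left t).symm),
    intervalIntegral.integral_comp_sub_left (fun s ↦ s ^ r), sub_self, sub_zero,
    integral_rpow (.inl hr), Real.zero_rpow (by linarith)]
  ring

-- `x - a (t - s)` is the convex combination of its values `x - t a` at `s = 0` and `x` at `s = t`.
lemma max_mul_min_div_le_sub_mul (ht : 0 < t) (hx : 0 ≤ x) (hxt : 0 ≤ x - t * a)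
    (hs : s ∈ Icc 0 t) :
    max x (x - t * a) * (min s (t - s) / t) ≤ x - a * (t - s) := by
  have h_sub : 0 ≤ t - s := sub_nonneg.2 hs.2
  have h_convex : x - a * (t - s) = (x * s + (x - t * a) * (t - s)) / t := by
    field_simp
    ring
  rw [h_convex, ← mul_div_assoc]
  gcongr
  rcases max_choice x (x - t * a) with h | h <;> rw [h]
  · linarith [mul_le_mul_of_nonneg_left (min_le_left s (t - s)) hx, mul_nonneg hxt h_sub]
  · linarith [mul_le_mul_of_nonneg_left (min_le_right s (t - s)) hxt, mul_nonneg hx hs.1]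

lemma sub_mul_pos (hx : 0 ≤ x) (hxt : 0 ≤ x - t * a) (hN : 0 < max x (x - t * a))
    (hs : s ∈ Ioo 0 t) : 0 < x - a * (t - s) := by
  have ht : 0 < t := hs.1.trans hs.2
  have h_min : 0 < min s (t - s) := lt_min hs.1 (sub_pos.2 hs.2)
  exact (by positivity : 0 < max x (x - t * a) * (min s (t - s) / t)).trans_le
    (max_mul_min_div_le_sub_mul ht hx hxt (Ioo_subset_Icc_self hs))

lemma sub_mul_rpow_le (hr : r ≤ 0) (hx : 0 ≤ x) (hxt : 0 ≤ x - t * a)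
    (hN : 0 < max x (x - t * a)) (hs : s ∈ Ioo 0 t) :
    (x - a * (t - s)) ^ r ≤ (max x (x - t * a) / t) ^ r * (s ^ r + (t - s) ^ r) := by
  have ht : 0 < t := hs.1.trans hs.2
  have h_sub : 0 < t - s := sub_pos.2 hs.2
  have h_min : 0 < min s (t - s) := lt_min hs.1 h_sub
  calc (x - a * (t - s)) ^ r
      ≤ (max x (x - t * a) * (min s (t - s) / t)) ^ r :=
        Real.rpow_le_rpow_of_nonpos (by positivity)
          (max_mul_min_div_le_sub_mul ht hx hxt (Ioo_subset_Icc_self hs)) hr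
    _ = (max x (x - t * a) / t) ^ r * min s (t - s) ^ r := by
        rw [← Real.mul_rpow (by positivity) h_min.le, div_mul_eq_mul_div, mul_div_assoc]
    _ ≤ _ := by
        gcongr
        have h_s : 0 ≤ s ^ r := Real.rpow_nonneg hs.1.le r
        have h_t : 0 ≤ (t - s) ^ r := Real.rpow_nonneg h_sub.le r
        rcases min_choice s (t - s) with h | h <;> rw [h] <;> linarith

theorem integrableOn_sub_mul_rpow (hr : -1 < r) (hr₀ : r ≤ 0) (ht : 0 < t) (hx : 0 ≤ x)
    (hxt : 0 ≤ x - t * a) (hN : 0 < max x (x - t * a)) :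
    IntegrableOn (fun s ↦ (x - a * (t - s)) ^ r) (Ioo 0 t) := by
  have h_major := (intervalIntegrable_iff_integrableOn_Ioo_of_le ht.le).1
    (intervalIntegrable_rpow_add_sub_rpow (t := t) hr)
  refine (h_major.const_mul ((max x (x - t * a) / t) ^ r)).mono'
    (Measurable.pow_const (by fun_prop) r).aestronglyMeasurable
    ((ae_restrict_iff' measurableSet_Ioo).2 (.of_forall fun s hs ↦ ?_))
  rw [Real.norm_of_nonneg (Real.rpow_nonneg (sub_mul_pos hx hxt hN hs).le r)]
  exact sub_mul_rpow_le hr₀ hx hxt hN hs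

theorem setIntegral_sub_mul_rpow_le (hr : -1 < r) (hr₀ : r ≤ 0) (ht : 0 < t) (hx : 0 ≤ x)
    (hxt : 0 ≤ x - t * a) (hN : 0 < max x (x - t * a)) :
    ∫ s in Ioo 0 t, (x - a * (t - s)) ^ r ≤ 2 / (r + 1) * t * max x (x - t * a) ^ r := by
  have h_major := (intervalIntegrable_iff_integrableOn_Ioo_of_le ht.le).1
    (intervalIntegrable_rpow_add_sub_rpow (t := t) hr)
  calc ∫ s in Ioo 0 t, (x - a * (t - s)) ^ r
      ≤ ∫ s in Ioo 0 t, (max x (x - t * a) / t) ^ r * (s ^ r + (t - s) ^ r) :=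
        setIntegral_mono_on (integrableOn_sub_mul_rpow hr hr₀ ht hx hxt hN)
          (h_major.const_mul _) measurableSet_Ioo fun s hs ↦ sub_mul_rpow_le hr₀ hx hxt hN hs
    _ = (max x (x - t * a) / t) ^ r * (2 * t ^ (r + 1) / (r + 1)) := by
        rw [integral_const_mul, ← integral_Ioc_eq_integral_Ioo,
          ← intervalIntegral.integral_of_le ht.le, integral_rpow_add_sub_rpow hr]
    _ = _ := by
        have h_rpow : t ^ r ≠ 0 := (Real.rpow_pos_of_pos ht r).ne'
        rw [Real.div_rpow hN.le ht.le, Real.rpow_add_one ht.ne']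
        field_simp [h_rpow]

theorem setIntegral_exp_mul_comp_sub_mul_le {I : ℝ → ℝ} {K γ : ℝ} (hI_nonneg : ∀ X > 0, 0 ≤ I X)
    (hI : ∀ X > 0, I X ≤ K * (1 + X ^ r)) (hK : 0 ≤ K) (hγ : 0 ≤ γ)
    (hr : -1 < r) (hr₀ : r ≤ 0) (ht : 0 < t) (hx : 0 ≤ x)
    (hxt : 0 ≤ x - t * a) (hN : 0 < max x (x - t * a)) :
    ∫ s in Icc 0 t, Real.exp (-γ * (t - s)) * I (x - a * (t - s)) ≤
      K * t * (1 + 2 / (r + 1) * max x (x - t * a) ^ r) := by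
  have h_const : IntegrableOn (fun _ : ℝ ↦ (1 : ℝ)) (Ioo 0 t) := by simp
  have h_rpow := integrableOn_sub_mul_rpow hr hr₀ ht hx hxt hN
  rw [integral_Icc_eq_integral_Ioo]
  calc ∫ s in Ioo 0 t, Real.exp (-γ * (t - s)) * I (x - a * (t - s))
      ≤ ∫ s in Ioo 0 t, K * (1 + (x - a * (t - s)) ^ r) := by
        refine setIntegral_mono_of_nonneg
          (fun s hs ↦ mul_nonneg (Real.exp_nonneg _) (hI_nonneg _ (sub_mul_pos hx hxt hN hs)))
          (fun s hs ↦ ?_) ((h_const.add h_rpow).const_mul K)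
        have h_pos := sub_mul_pos hx hxt hN hs
        have h_exp : Real.exp (-γ * (t - s)) ≤ 1 :=
          Real.exp_le_one_iff.2 (by nlinarith [hs.2])
        exact (mul_le_of_le_one_left (hI_nonneg _ h_pos) h_exp).trans (hI _ h_pos)
    _ = K * (t + ∫ s in Ioo 0 t, (x - a * (t - s)) ^ r) := by
        rw [integral_const_mul, integral_add h_const h_rpow]
        simp [ht.le]
    _ ≤ K * (t + 2 / (r + 1) * t * max x (x - t * a) ^ r) := by
        gcongr
        exact setIntegral_sub_mul_rpow_le hr hr₀ ht hx hxt hN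
    _ = _ := by ring

end TimeIntegral

section WeightAtEndpoint

variable {u c ν₀ x t : ℝ} {ξ : EuclideanSpace ℝ (Fin 3)} {χ : ℝ → ℝ}

lemma alphaTilde_le_mul_max (hk : 0 < c * ν₀) (ht : 1 ≤ t) (hx : 0 ≤ x)
    (hxt : 0 ≤ x - t * (ξ 0 + u)) :
    alphaTilde u c ν₀ x ξ ≤ (1 + c * ν₀) * max x (x - t * (ξ 0 + u)) := by
  have h_abs : |ξ 0 + u| ≤ max x (x - t * (ξ 0 + u)) := by
    rcases abs_cases (ξ 0 + u) with ⟨h, h_sign⟩ | ⟨h, h_sign⟩ <;> rw [h]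
    · exact le_max_of_le_left (by nlinarith)
    · exact le_max_of_le_right (by nlinarith)
  have h_x : c * ν₀ * x ≤ c * ν₀ * max x (x - t * (ξ 0 + u)) := by
    gcongr
    exact le_max_left _ _
  linarith [alphaTilde_le (u := u) (ξ := ξ) hk hx]

lemma IsTruncation.mul_max_rpow_le (hχ : IsTruncation χ) (hk : 0 < c * ν₀) (ht : 1 ≤ t)
    (hx : 0 ≤ x) (hxt : 0 ≤ x - t * (ξ 0 + u)) (hN : 0 < max x (x - t * (ξ 0 + u))) :
    χ (alphaTilde u c ν₀ x ξ) * max x (x - t * (ξ 0 + u)) ^ (-(1 / 2) : ℝ) ≤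
      √(2 * (1 + c * ν₀)) := by
  set N := max x (x - t * (ξ 0 + u))
  rw [Real.rpow_neg hN.le, ← Real.sqrt_eq_rpow, mul_inv_le_iff₀ (Real.sqrt_pos.2 hN),
    ← Real.sqrt_mul (by positivity)]
  refine (hχ.le_sqrt alphaTilde_nonneg).trans (Real.sqrt_le_sqrt ?_)
  linarith [alphaTilde_le_mul_max hk ht hx hxt]

end WeightAtEndpoint

theorem nln_inner_general {C u c ν₀ : ℝ} {χ : ℝ → ℝ} (hC : 0 < C) (hk : 0 < c * ν₀)
    (hχ : IsTruncation χ) :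
    ∃ C' > (0 : ℝ), ∀ γ ≥ (0 : ℝ), ∀ t ≥ (1 : ℝ), ∀ x ≥ (0 : ℝ), ∀ ξ : EuclideanSpace ℝ (Fin 3),
      0 ≤ x - t * (ξ 0 + u) →
        ∫ s in Icc 0 t, Real.exp (-γ * (t - s)) *
            invWeightIntegral C u c ν₀ χ (x - (ξ 0 + u) * (t - s)) ≤
          C' * t / χ (alphaTilde u c ν₀ x ξ) := by
  obtain ⟨K, hK, h_inner⟩ := exists_invWeightIntegral_le (u := u) hC hk hχ
  refine ⟨K * (1 + 4 * √(2 * (1 + c * ν₀))) + 1, by positivity, fun γ hγ t ht x hx ξ hxt ↦ ?_⟩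
  rcases (alphaTilde_nonneg : 0 ≤ alphaTilde u c ν₀ x ξ).eq_or_lt with h_zero | h_pos
  · -- Here `α(x,ξ)⁻¹ = ∞`; with `1 / 0 = 0`, the claim survives because the left side is `0` too.
    obtain ⟨ha, rfl⟩ := (alphaTilde_eq_zero_iff hk).1 h_zero.symm
    simp [← h_zero, ha, invWeightIntegral_zero hC hχ, hχ.apply_zero]
  have hN : 0 < max x (x - t * (ξ 0 + u)) :=
    pos_of_mul_pos_right (h_pos.trans_le (alphaTilde_le_mul_max hk ht hx hxt)) (by positivity)
  have h_endpoint := hχ.mul_max_rpow_le hk ht hx hxt hN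
  have h_integral := setIntegral_exp_mul_comp_sub_mul_le (fun _ _ ↦ invWeightIntegral_nonneg hχ)
    h_inner hK hγ (by norm_num) (by norm_num) (one_pos.trans_le ht) hx hxt hN
  set α := χ (alphaTilde u c ν₀ x ξ)
  set N := max x (x - t * (ξ 0 + u))
  rw [le_div_iff₀ (hχ.pos h_pos)]
  calc _ ≤ K * t * (1 + 2 / (-(1 / 2) + 1) * N ^ (-(1 / 2) : ℝ)) * α :=
        mul_le_mul_of_nonneg_right h_integral (hχ.pos h_pos).le
    _ = K * t * (α + 4 * (α * N ^ (-(1 / 2) : ℝ))) := by ring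
    _ ≤ K * t * (1 + 4 * √(2 * (1 + c * ν₀))) := by
        gcongr
        exact hχ.le_one _ h_pos.le
    _ ≤ (K * (1 + 4 * √(2 * (1 + c * ν₀))) + 1) * t := by linarith

/-- first part of Lemma NLN-inner, with `c = 1/8`:
for every `C > 0` there are `C' > 0` and `t₀ ≥ 1` such that for all `t ≥ t₀`,
`x ≥ 0` and `ξ` with `x − t(ξ₁+u) ≥ 0`,
`∫₀^t e^{−ν(ξ)(t−s)} ∫ e^{−C|ξ'|²} α(x−(ξ₁+u)(t−s),ξ')⁻¹ dξ' ds ≤ C' t / α(x,ξ)`. -/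
theorem nln_inner (ν₀ u : ℝ) (hν₀ : 0 < ν₀) (hu : |u| ≤ 1/2)
    (χ χ' : ℝ → ℝ)
    (hderiv : ∀ s ≥ (0:ℝ), HasDerivAt χ (χ' s) s)
    (hcont : ContinuousOn χ' (Set.Ici (0:ℝ)))
    (hmono : ∀ s ≥ (0:ℝ), 0 ≤ χ' s)
    (hid : ∀ s : ℝ, 0 ≤ s → s ≤ 1/2 → χ s = s)
    (hone : ∀ s : ℝ, 2 ≤ s → χ s = 1)
    (hbound : ∀ s ≥ (0:ℝ), |χ' s| ≤ 1)
    (ν : EuclideanSpace ℝ (Fin 3) → ℝ) (hνmeas : Measurable ν)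
    (hνlb : ∀ ξ, ν₀ * (1 + ‖ξ‖) ≤ ν ξ) :
    ∀ C > (0:ℝ), ∃ C' > (0:ℝ), ∃ t₀ ≥ (1:ℝ), ∀ t ≥ t₀,
      ∀ x ≥ (0:ℝ), ∀ ξ : EuclideanSpace ℝ (Fin 3), 0 ≤ x - t * (ξ 0 + u) →
        (∫ s in Set.Icc (0:ℝ) t, Real.exp (-ν ξ * (t - s)) *
            ∫ ξ' : EuclideanSpace ℝ (Fin 3),
              Real.exp (-C * ‖ξ'‖ ^ 2) *
                (χ (alphaTilde u (1/8) ν₀ (x - (ξ 0 + u) * (t - s)) ξ'))⁻¹) ≤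
          C' * t / χ (alphaTilde u (1/8) ν₀ x ξ) := by
  intro C hC
  obtain ⟨C', hC', h⟩ := nln_inner_general (u := u) (c := 1 / 8) hC (by positivity)
    (IsTruncation.of_hasDerivAt hderiv hmono hid hone)
  exact ⟨C', hC', 1, le_rfl, fun t ht x hx ξ hxt ↦
    h (ν ξ) (le_trans (by positivity) (hνlb ξ)) t ht x hx ξ hxt⟩
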